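/- Let G=(V,E) be an exchange network with weights w_e ∈ [0,1] for all e∈E, let κ∈(0,1), and take any initial condition α^0 ∈ [0,1]^{2|E|}. For any ε>0, set T*(ε) = 1/(π κ(1−κ) ε²). Then for all t ≥ T*(ε), the iterate α^t of the natural dynamics is an ε-fixed point. -/

import Mathlib

namespace EN

open Finset

variable {V : Type*}

/-- The nonnegative part `(x)₊ = max (x, 0)`. -/
noncomputable def pos (x : ℝ) : ℝ := max x 0

variable [Fintype V] [DecidableEq V]

/-- The maximum of `f` over a finite set of vertices (`0` over the empty set). -/
noncomputable def fmax (s : Finset V) (f : V → ℝ) : ℝ := ⨆ k ∈ s, f k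

/-- The offer from `i` to `j` given messages `α` and weights `w`:
`m_{i→j} = (w_{ij} − α_{i\j})₊ − (1/2) (w_{ij} − α_{i\j} − α_{j\i})₊`. -/
noncomputable def offer (w α : V → V → ℝ) (i j : V) : ℝ :=
  pos (w i j - α i j) - (1 / 2) * pos (w i j - α i j - α j i)

/-- The update operator `T` of the natural dynamics:
`(Tα)_{i\j} = max_{k ∈ ∂i \ j} m_{k→i}`. -/
noncomputable def upd (G : SimpleGraph V) [DecidableRel G.Adj] (w α : V → V → ℝ)
    (i j : V) : ℝ :=
  fmax ((G.neighborFinset i).erase j) fun k => offer w α k i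

/-- The earnings estimate `γ_i = max_{k ∈ ∂i} m_{k→i}`. -/
noncomputable def earn (G : SimpleGraph V) [DecidableRel G.Adj] (w α : V → V → ℝ)
    (i : V) : ℝ :=
  fmax (G.neighborFinset i) fun k => offer w α k i

/-- Exchange network weights: symmetric and positive on every edge. -/
def GoodW (G : SimpleGraph V) (w : V → V → ℝ) : Prop :=
  (∀ i j, w i j = w j i) ∧ ∀ i j, G.Adj i j → 0 < w i j

/-- A valid message vector: nonnegative on all directed edges. -/
def ValidMsg (G : SimpleGraph V) (α : V → V → ℝ) : Prop :=
  ∀ i j, G.Adj i j → 0 ≤ α i j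

/-- Fixed point of the natural-dynamics update operator. -/
def IsFixedPt (G : SimpleGraph V) [DecidableRel G.Adj] (w α : V → V → ℝ) : Prop :=
  ∀ i j, G.Adj i j → upd G w α i j = α i j

/-- `ε`-fixed point. -/
def IsEpsFixedPt (G : SimpleGraph V) [DecidableRel G.Adj] (w α : V → V → ℝ) (ε : ℝ) : Prop :=
  ∀ i j, G.Adj i j → |α i j - upd G w α i j| ≤ ε

/-- The natural dynamics with damping factor `κ`: `α^{t+1} = (1−κ) α^t + κ T α^t`. -/
noncomputable def dyn (G : SimpleGraph V) [DecidableRel G.Adj] (w : V → V → ℝ) (κ : ℝ)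
    (α0 : V → V → ℝ) : ℕ → V → V → ℝ
  | 0 => α0
  | t + 1 => fun i j =>
      (1 - κ) * dyn G w κ α0 t i j + κ * upd G w (dyn G w κ α0 t) i j

/-- Sup norm over directed edges. -/
noncomputable def msgSup (G : SimpleGraph V) [DecidableRel G.Adj] (f : V → V → ℝ) : ℝ :=
  ⨆ p : V × V, if G.Adj p.1 p.2 then |f p.1 p.2| else 0

/-- `M` is a matching of `G`: a symmetric subrelation of adjacency pairing each node
with at most one partner. -/
structure IsMatching (G : SimpleGraph V) (M : V → V → Prop) : Prop where
  subset : ∀ i j, M i j → G.Adj i j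
  symm : ∀ i j, M i j → M j i
  unique : ∀ i j k, M i j → M i k → j = k

/-- `(M, γ)` is a trade outcome. -/
def IsOutcome (G : SimpleGraph V) (w : V → V → ℝ) (M : V → V → Prop) (γ : V → ℝ) : Prop :=
  IsMatching G M ∧ (∀ i, 0 ≤ γ i) ∧ (∀ i j, M i j → γ i + γ j = w i j) ∧
    ∀ i, (∀ j, ¬M i j) → γ i = 0

/-- Stability of an outcome. -/
def Stable (G : SimpleGraph V) (w : V → V → ℝ) (M : V → V → Prop) (γ : V → ℝ) : Prop :=
  ∀ i j, G.Adj i j → ¬M i j → w i j ≤ γ i + γ j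

/-- The best alternative of `i` excluding `j`: `max_{k ∈ ∂i \ j} (w_{ik} − γ_k)₊`. -/
noncomputable def bestAlt (G : SimpleGraph V) [DecidableRel G.Adj] (w : V → V → ℝ)
    (γ : V → ℝ) (i j : V) : ℝ :=
  fmax ((G.neighborFinset i).erase j) fun k => pos (w i k - γ k)

/-- Balance of an outcome. -/
def Balanced (G : SimpleGraph V) [DecidableRel G.Adj] (w : V → V → ℝ) (M : V → V → Prop)
    (γ : V → ℝ) : Prop :=
  ∀ i j, M i j → γ i - bestAlt G w γ i j = γ j - bestAlt G w γ j i

/-- Nash bargaining solution: a stable and balanced trade outcome. -/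
def IsNBSolution (G : SimpleGraph V) [DecidableRel G.Adj] (w : V → V → ℝ)
    (M : V → V → Prop) (γ : V → ℝ) : Prop :=
  IsOutcome G w M γ ∧ Stable G w M γ ∧ Balanced G w M γ

/-- `ε`-balance. -/
def EpsBalanced (G : SimpleGraph V) [DecidableRel G.Adj] (w : V → V → ℝ)
    (M : V → V → Prop) (γ : V → ℝ) (ε : ℝ) : Prop :=
  ∀ i j, M i j → |(γ i - bestAlt G w γ i j) - (γ j - bestAlt G w γ j i)| ≤ ε

/-- `ε`-Nash bargaining solution. -/
def IsEpsNB (G : SimpleGraph V) [DecidableRel G.Adj] (w : V → V → ℝ)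
    (M : V → V → Prop) (γ : V → ℝ) (ε : ℝ) : Prop :=
  IsOutcome G w M γ ∧ Stable G w M γ ∧ EpsBalanced G w M γ ε

/-- Feasible point of the LP relaxation of maximum weight matching. -/
def LPFeasible (G : SimpleGraph V) [DecidableRel G.Adj] (x : V → V → ℝ) : Prop :=
  (∀ i j, x i j = x j i) ∧ (∀ i j, 0 ≤ x i j) ∧ (∀ i j, ¬G.Adj i j → x i j = 0) ∧
    ∀ i, ∑ j ∈ G.neighborFinset i, x i j ≤ 1

/-- LP objective `Σ_{(i,j)∈E} w_{ij} x_{ij}` (each undirected edge counted once). -/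
noncomputable def LPval (G : SimpleGraph V) [DecidableRel G.Adj] (w x : V → V → ℝ) : ℝ :=
  (1 / 2) * ∑ i, ∑ j ∈ G.neighborFinset i, w i j * x i j

/-- Optimal point of the LP relaxation of maximum weight matching. -/
def LPOptimal (G : SimpleGraph V) [DecidableRel G.Adj] (w x : V → V → ℝ) : Prop :=
  LPFeasible G x ∧ ∀ y, LPFeasible G y → LPval G w y ≤ LPval G w x

def Integral (x : V → V → ℝ) : Prop := ∀ i j, x i j = 0 ∨ x i j = 1

def HalfIntegral (x : V → V → ℝ) : Prop := ∀ i j, x i j = 0 ∨ x i j = 1 / 2 ∨ x i j = 1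

open Classical in
/-- The LP point associated to a matching. -/
noncomputable def mInd (M : V → V → Prop) (i j : V) : ℝ := if M i j then 1 else 0

/-- The state with offers `m` induces the matching `M`: every node receiving a positive
offer is matched and receives its unique best offer from its partner, and every node
with zero earnings is unmatched. -/
def Induces (G : SimpleGraph V) [DecidableRel G.Adj] (m : V → V → ℝ)
    (M : V → V → Prop) : Prop :=
  IsMatching G M ∧
    (∀ i, (∃ k, G.Adj i k ∧ 0 < m k i) →
      ∃ j, M i j ∧ ∀ k, G.Adj i k → k ≠ j → m k i < m j i) ∧
    ∀ i, (fmax (G.neighborFinset i) fun k => m k i) = 0 → ∀ j, ¬M i j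

/-- Feasibility for the dual LP. -/
def DualFeasible (G : SimpleGraph V) (w : V → V → ℝ) (y : V → ℝ) : Prop :=
  (∀ i, 0 ≤ y i) ∧ ∀ i j, G.Adj i j → w i j ≤ y i + y j

/-- Optimality for the dual LP. -/
def DualOptimal (G : SimpleGraph V) (w : V → V → ℝ) (y : V → ℝ) : Prop :=
  DualFeasible G w y ∧ ∀ z, DualFeasible G w z → ∑ i, y i ≤ ∑ i, z i

/-- The unmatched balance property at every edge. -/
def UnmatchedBalance (G : SimpleGraph V) [DecidableRel G.Adj] (w : V → V → ℝ)
    (y : V → ℝ) : Prop :=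
  ∀ i j, G.Adj i j → y i - bestAlt G w y i j = y j - bestAlt G w y j i

/-! ### Unequal division -/

/-- Valid split fractions: `r_{ij} ∈ (0,1)` with `r_{ij} + r_{ji} = 1` on every edge. -/
def GoodR (G : SimpleGraph V) (r : V → V → ℝ) : Prop :=
  ∀ i j, G.Adj i j → 0 < r i j ∧ r i j < 1 ∧ r i j + r j i = 1

/-- The UD offer from `i` to `j`. -/
noncomputable def offerUD (w r α : V → V → ℝ) (i j : V) : ℝ :=
  pos (w i j - α i j) - r i j * pos (w i j - α i j - α j i)

/-- The UD update operator. -/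
noncomputable def updUD (G : SimpleGraph V) [DecidableRel G.Adj] (w r α : V → V → ℝ)
    (i j : V) : ℝ :=
  fmax ((G.neighborFinset i).erase j) fun k => offerUD w r α k i

/-- The UD earnings estimate. -/
noncomputable def earnUD (G : SimpleGraph V) [DecidableRel G.Adj] (w r α : V → V → ℝ)
    (i : V) : ℝ :=
  fmax (G.neighborFinset i) fun k => offerUD w r α k i

/-- Fixed point of the UD update operator. -/
def IsFixedPtUD (G : SimpleGraph V) [DecidableRel G.Adj] (w r α : V → V → ℝ) : Prop :=
  ∀ i j, G.Adj i j → updUD G w r α i j = α i j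

/-- Correct division. -/
def CorrectDiv (G : SimpleGraph V) [DecidableRel G.Adj] (w r : V → V → ℝ)
    (M : V → V → Prop) (γ : V → ℝ) : Prop :=
  ∀ i j, M i j →
    (1 / r i j) * (γ i - bestAlt G w γ i j) = (1 / r j i) * (γ j - bestAlt G w γ j i)

/-- UD solution: a stable trade outcome satisfying correct division. -/
def IsUDSolution (G : SimpleGraph V) [DecidableRel G.Adj] (w r : V → V → ℝ)
    (M : V → V → Prop) (γ : V → ℝ) : Prop :=
  IsOutcome G w M γ ∧ Stable G w M γ ∧ CorrectDiv G w r M γ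

/-- Edge surplus. -/
noncomputable def surp (G : SimpleGraph V) [DecidableRel G.Adj] (w : V → V → ℝ)
    (γ : V → ℝ) (i j : V) : ℝ :=
  w i j - bestAlt G w γ i j - bestAlt G w γ j i

open Classical in
/-- The rebalanced allocation `γ^reb`. -/
noncomputable def reb (G : SimpleGraph V) [DecidableRel G.Adj] (w r : V → V → ℝ)
    (M : V → V → Prop) (γ : V → ℝ) (i : V) : ℝ :=
  if h : ∃ j, M i j then
    bestAlt G w γ i h.choose + r i h.choose * surp G w γ i h.choose
  else 0

/-- The Edge Rebalancing iteration `γ^{t+1} = κ γ^reb(γ^t) + (1−κ) γ^t`. -/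
noncomputable def rebIter (G : SimpleGraph V) [DecidableRel G.Adj] (w r : V → V → ℝ)
    (M : V → V → Prop) (κ : ℝ) (γ0 : V → ℝ) : ℕ → V → ℝ
  | 0 => γ0
  | t + 1 => fun i =>
      κ * reb G w r M (rebIter G w r M κ γ0 t) i + (1 - κ) * rebIter G w r M κ γ0 t i

/-!
The natural dynamics is a Krasnoselskii–Mann iteration `x (n + 1) = (1 - κ) x n + κ y n` with
`y n = T (x n)`, where `T` is nonexpansive in the supremum norm because, for nonnegative messages,
an offer is the average of `(w - a)₊` and `min (w - a)₊ b`. The rate is that of Baillon and Bruck.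
For messages in `[0, D]`, one bounds `‖x m - x (m + r)‖` and `‖x m - y (m + r)‖` by `D` times the
probability that a lazy random walk, which moves by `1` and by `-1` with probability `κ (1 - κ)`
each, avoids `0` up to time `m`; the walk starts at `B` for the first bound and at `1 + B` for the
second, with `B` binomial of parameters `r` and `κ`. The induction on `m` expands both points of
the iteration at once, that is, it flips two independent coins of bias `κ`, whose difference is a
step of the walk. The case `r = 0` bounds `‖x m - T (x m)‖` by the survival probability from `1`.
Chebyshev polynomials diagonalise the killed walk, and the resulting integral is at most a
Gaussian one.
-/

section Survival

/-- The probability that a lazy random walk on `ℕ`, which moves by `+1` and `-1` with probability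
`q` each and otherwise rests, does not visit `0` up to time `m` when started at `k`. The arguments
after `q` are `m` and `k`. -/
def survival (q : ℝ) : ℕ → ℕ → ℝ
  | _, 0 => 0
  | 0, _ + 1 => 1
  | m + 1, k + 1 =>
      (1 - 2 * q) * survival q m (k + 1) + q * survival q m (k + 2) + q * survival q m k

theorem survival_zero_right (q : ℝ) (m : ℕ) : survival q m 0 = 0 := by
  cases m <;> rfl

open Polynomial Polynomial.Chebyshev MeasureTheory
open scoped Real

/-- The polynomial with value `sin (k θ) cot (θ / 2)` at `cos θ`. For fixed `x`, the function
`k ↦ (walkPoly k).eval x` is an eigenvector of the walk killed at `0`. -/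
noncomputable def walkPoly (k : ℕ) : ℝ[X] := (1 + X) * U ℝ ((k : ℤ) - 1)

theorem walkPoly_zero : walkPoly 0 = 0 := by
  simp [walkPoly]

theorem walkPoly_one : walkPoly 1 = 1 + X := by
  simp [walkPoly]

theorem walkPoly_add_two (k : ℕ) : walkPoly (k + 2) = 2 * X * walkPoly (k + 1) - walkPoly k := by
  have hU := U_eq ℝ ((k : ℤ) + 1)
  rw [show (k : ℤ) + 1 - 1 = k by ring, show (k : ℤ) + 1 - 2 = k - 1 by ring] at hU
  simp only [walkPoly, Nat.cast_add, Nat.cast_one, Nat.cast_ofNat, add_sub_cancel_right,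
    show (k : ℤ) + 2 - 1 = k + 1 by ring, hU]
  ring

theorem walkPoly_succ (k : ℕ) : walkPoly (k + 1) = walkPoly k + (T ℝ k + T ℝ (k + 1)) := by
  have hT := T_eq_U_sub_X_mul_U ℝ k
  have hT' := U_eq_X_mul_U_add_T ℝ k
  have hU := U_eq ℝ ((k : ℤ) + 1)
  rw [show (k : ℤ) + 1 - 1 = k by ring, show (k : ℤ) + 1 - 2 = k - 1 by ring] at hU
  simp only [walkPoly, Nat.cast_add, Nat.cast_one, add_sub_cancel_right]
  linear_combination hT' - hT - hU

theorem integral_walkPoly_succ (k : ℕ) : ∫ x, (walkPoly (k + 1)).eval x ∂measureT = π := by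
  have integrable (p : ℝ[X]) : Integrable (fun x => p.eval x) measureT :=
    integrable_measureT p.continuous.continuousOn
  have integral_eval_add (p q : ℝ[X]) :
      ∫ x, (p + q).eval x ∂measureT = ∫ x, p.eval x ∂measureT + ∫ x, q.eval x ∂measureT := by
    simp only [eval_add, integral_add (integrable p) (integrable q)]
  have integral_T (n : ℕ) : ∫ x, (T ℝ (n + 1)).eval x ∂measureT = 0 :=
    integral_eval_T_real_measureT_of_ne_zero (by positivity)
  have integral_succ (n : ℕ) : ∫ x, (walkPoly (n + 1)).eval x ∂measureT =
      ∫ x, (walkPoly n).eval x ∂measureT + ∫ x, (T ℝ n).eval x ∂measureT := by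
    rw [walkPoly_succ, integral_eval_add, integral_eval_add, integral_T, add_zero]
  induction k with
  | zero =>
    rw [integral_succ, walkPoly_zero, Nat.cast_zero, integral_eval_T_real_measureT_zero]
    simp
  | succ k ih =>
    rw [integral_succ, ih, Nat.cast_succ, integral_T, add_zero]

theorem survival_eq_integral (q : ℝ) (m k : ℕ) :
    survival q m k =
      π⁻¹ * ∫ x, (walkPoly k).eval x * (1 - 2 * q + 2 * q * x) ^ m ∂measureT := by
  induction m generalizing k with
  | zero =>
    cases k with
    | zero => simp [survival, walkPoly_zero]
    | succ k => simp [survival, integral_walkPoly_succ, Real.pi_ne_zero]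
  | succ m ih =>
    cases k with
    | zero => simp [survival, walkPoly_zero]
    | succ k =>
      have integrable (c : ℝ) (j : ℕ) : Integrable
          (fun x => c * ((walkPoly j).eval x * (1 - 2 * q + 2 * q * x) ^ m)) measureT :=
        integrable_measureT (by fun_prop)
      have eigen (x : ℝ) :
          (walkPoly (k + 1)).eval x * (1 - 2 * q + 2 * q * x) ^ (m + 1) =
            (1 - 2 * q) * ((walkPoly (k + 1)).eval x * (1 - 2 * q + 2 * q * x) ^ m) +
            q * ((walkPoly (k + 2)).eval x * (1 - 2 * q + 2 * q * x) ^ m) +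
            q * ((walkPoly k).eval x * (1 - 2 * q + 2 * q * x) ^ m) := by
        simp only [walkPoly_add_two, eval_sub, eval_mul, eval_ofNat, eval_X]
        ring
      simp only [survival, ih, eigen]
      rw [integral_add ((integrable _ _).fun_add (integrable _ _)) (integrable _ _),
        integral_add (integrable _ _) (integrable _ _)]
      simp only [integral_const_mul]
      ring

theorem integral_zero_one_exp_neg_mul_sq_le {b : ℝ} (hb : 0 < b) :
    ∫ s in (0 : ℝ)..1, Real.exp (-b * s ^ 2) ≤ √(π / b) / 2 := by
  rw [← integral_gaussian_Ioi b, intervalIntegral.integral_of_le zero_le_one]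
  exact setIntegral_mono_set (integrable_exp_neg_mul_sq hb).integrableOn
    (.of_forall fun _ => (Real.exp_pos _).le) Set.Ioc_subset_Ioi_self.eventuallyLE

theorem integral_comp_sin_half_mul_cos_half {g : ℝ → ℝ} (hg : Continuous g) :
    ∫ θ in (0 : ℝ)..π, g (Real.sin (θ / 2)) * (Real.cos (θ / 2) * (1 / 2)) =
      ∫ s in (0 : ℝ)..1, g s := by
  have h := intervalIntegral.integral_comp_mul_deriv (a := 0) (b := π)
    (fun θ _ => ((hasDerivAt_id θ).div_const 2).sin) (by fun_prop) hg
  simpa using h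

theorem one_add_cos_mul_pow_le {q θ : ℝ} (hq4 : 4 * q ≤ 1) (hθ : θ ∈ Set.Icc 0 π)
    (n : ℕ) :
    (1 + Real.cos θ) * (1 - 2 * q + 2 * q * Real.cos θ) ^ n ≤
      4 * (Real.exp (-(4 * q * n) * Real.sin (θ / 2) ^ 2) * (Real.cos (θ / 2) * (1 / 2))) := by
  have cos_nonneg : 0 ≤ Real.cos (θ / 2) :=
    Real.cos_nonneg_of_mem_Icc ⟨by linarith [hθ.1, Real.pi_pos], by linarith [hθ.2]⟩
  have cos_eq : Real.cos θ = 2 * Real.cos (θ / 2) ^ 2 - 1 := by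
    rw [← Real.cos_two_mul, mul_div_cancel₀ θ two_ne_zero]
  have base_eq : 1 - 2 * q + 2 * q * Real.cos θ = 1 - 4 * q * Real.sin (θ / 2) ^ 2 := by
    rw [cos_eq, Real.sin_sq]
    ring
  have base_nonneg : 0 ≤ 1 - 4 * q * Real.sin (θ / 2) ^ 2 := by
    nlinarith [Real.sin_sq_le_one (θ / 2), sq_nonneg (Real.sin (θ / 2))]
  have pow_le : (1 - 4 * q * Real.sin (θ / 2) ^ 2) ^ n ≤
      Real.exp (-(4 * q * n) * Real.sin (θ / 2) ^ 2) := calc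
    _ ≤ Real.exp (-(4 * q * Real.sin (θ / 2) ^ 2)) ^ n :=
      pow_le_pow_left₀ base_nonneg (Real.one_sub_le_exp_neg _) n
    _ = _ := by rw [← Real.exp_nat_mul]; ring_nf
  calc (1 + Real.cos θ) * (1 - 2 * q + 2 * q * Real.cos θ) ^ n
      = 2 * Real.cos (θ / 2) ^ 2 * (1 - 4 * q * Real.sin (θ / 2) ^ 2) ^ n := by
        rw [base_eq, cos_eq]; ring
    _ ≤ 2 * Real.cos (θ / 2) * Real.exp (-(4 * q * n) * Real.sin (θ / 2) ^ 2) := by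
        gcongr
        exact pow_le_of_le_one cos_nonneg (Real.cos_le_one _) two_ne_zero
    _ = _ := by ring

theorem survival_one_le {q : ℝ} (hq : 0 < q) (hq4 : 4 * q ≤ 1) {n : ℕ} (hn : 0 < n) :
    survival q n 1 ≤ 1 / √(π * q * n) := by
  have sqrt_eq : √(π / (4 * q * n)) = π / 2 / √(π * q * n) := by
    rw [← Real.sqrt_sq (by positivity : 0 ≤ π / 2), ← Real.sqrt_div (by positivity)]
    congr 1
    field_simp
    norm_num
  calc survival q n 1
      = π⁻¹ * ∫ θ in (0 : ℝ)..π,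
          (1 + Real.cos θ) * (1 - 2 * q + 2 * q * Real.cos θ) ^ n := by
        simp [survival_eq_integral, integral_measureT_eq_integral_cos, walkPoly_one]
    _ ≤ π⁻¹ * ∫ θ in (0 : ℝ)..π,
          4 * (Real.exp (-(4 * q * n) * Real.sin (θ / 2) ^ 2) *
            (Real.cos (θ / 2) * (1 / 2))) := by
        gcongr
        exact intervalIntegral.integral_mono_on Real.pi_pos.le
          (Continuous.intervalIntegrable (by fun_prop) _ _)
          (Continuous.intervalIntegrable (by fun_prop) _ _)
          fun θ hθ => one_add_cos_mul_pow_le hq4 hθ n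
    _ = π⁻¹ * (4 * ∫ s in (0 : ℝ)..1, Real.exp (-(4 * q * n) * s ^ 2)) := by
        rw [intervalIntegral.integral_const_mul, integral_comp_sin_half_mul_cos_half
          (g := fun s => Real.exp (-(4 * q * n) * s ^ 2)) (by fun_prop)]
    _ ≤ π⁻¹ * (4 * (√(π / (4 * q * n)) / 2)) := by
        gcongr
        exact integral_zero_one_exp_neg_mul_sq_le (by positivity)
    _ = 1 / √(π * q * n) := by
        rw [sqrt_eq]
        field_simp
        norm_num

end Survival

section AveragedSequence

open scoped Real

/-- The expectation of `g (k + B)` for a binomial variable `B` with parameters `r` and `κ`, given by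
the recursion that conditions on one of the `r` trials. -/
def binomialMean (κ : ℝ) (g : ℕ → ℝ) : ℕ → ℕ → ℝ
  | 0, k => g k
  | r + 1, k => (1 - κ) * binomialMean κ g r k + κ * binomialMean κ g r (k + 1)

theorem binomialMean_survival_zero (κ q : ℝ) (r k : ℕ) :
    binomialMean κ (survival q 0) r (k + 1) = 1 := by
  induction r generalizing k with
  | zero => simp [binomialMean, survival]
  | succ r ih => simp [binomialMean, ih]

/-- The difference of two independent coins of bias `κ` is a step of the walk. -/
theorem binomialMean_survival_succ (κ : ℝ) (m r k : ℕ) :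
    binomialMean κ (survival (κ * (1 - κ)) (m + 1)) r (k + 1) =
      (1 - κ) * binomialMean κ (survival (κ * (1 - κ)) m) (r + 1) (k + 1) +
        κ * binomialMean κ (survival (κ * (1 - κ)) m) (r + 1) k := by
  induction r generalizing k with
  | zero =>
    simp only [binomialMean, survival]
    ring
  | succ r ih =>
    rw [binomialMean, ih k, ih (k + 1)]
    simp only [binomialMean]
    ring

variable {E : Type*} [SeminormedAddCommGroup E] [NormedSpace ℝ E]

theorem norm_convex_combination_sub_le {κ A B : ℝ} (hκ : κ ∈ Set.Icc (0 : ℝ) 1) {a b z : E}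
    (ha : ‖a - z‖ ≤ A) (hb : ‖b - z‖ ≤ B) :
    ‖(1 - κ) • a + κ • b - z‖ ≤ (1 - κ) * A + κ * B := by
  have sub_eq : (1 - κ) • a + κ • b - z = (1 - κ) • (a - z) + κ • (b - z) := by module
  have hκ' : 0 ≤ 1 - κ := sub_nonneg.2 hκ.2
  rw [sub_eq]
  refine (norm_add_le _ _).trans ?_
  rw [norm_smul_of_nonneg hκ', norm_smul_of_nonneg hκ.1]
  gcongr
  exact hκ.1

variable {κ D : ℝ} {x y : ℕ → E}

theorem norm_sub_add_le_binomialMean_survival (hκ : κ ∈ Set.Icc (0 : ℝ) 1)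
    (hx : ∀ n, x (n + 1) = (1 - κ) • x n + κ • y n) {q : ℝ} {m : ℕ}
    (hm : ∀ r, ‖x m - y (m + r)‖ ≤ D * binomialMean κ (survival q m) r 1) (r : ℕ) :
    ‖x m - x (m + r)‖ ≤ D * binomialMean κ (survival q m) r 0 := by
  induction r with
  | zero => simp [binomialMean, survival_zero_right]
  | succ r ih =>
    rw [norm_sub_rev] at ih
    have h := norm_convex_combination_sub_le hκ ih ((norm_sub_rev _ _).trans_le (hm r))
    rw [← hx, norm_sub_rev] at h
    exact h.trans_eq (by rw [binomialMean]; ring)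

theorem norm_sub_le_binomialMean_survival (hκ : κ ∈ Set.Icc (0 : ℝ) 1)
    (hx : ∀ n, x (n + 1) = (1 - κ) • x n + κ • y n)
    (hy : ∀ m n, ‖y m - y n‖ ≤ ‖x m - x n‖) (hD : ∀ n, ‖x 0 - y n‖ ≤ D) (m r : ℕ) :
    ‖x m - y (m + r)‖ ≤ D * binomialMean κ (survival (κ * (1 - κ)) m) r 1 := by
  induction m generalizing r with
  | zero => simpa [binomialMean_survival_zero] using hD (0 + r)
  | succ m ih =>
    have hxx := norm_sub_add_le_binomialMean_survival hκ hx ih (r + 1)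
    have h := norm_convex_combination_sub_le hκ (ih (r + 1)) ((hy m (m + (r + 1))).trans hxx)
    rw [← hx] at h
    rw [show m + 1 + r = m + (r + 1) by ring]
    exact h.trans_eq (by rw [binomialMean_survival_succ]; ring)

theorem norm_sub_le_div_sqrt (hκ : κ ∈ Set.Ioo (0 : ℝ) 1)
    (hx : ∀ n, x (n + 1) = (1 - κ) • x n + κ • y n)
    (hy : ∀ m n, ‖y m - y n‖ ≤ ‖x m - x n‖) (hD : ∀ n, ‖x 0 - y n‖ ≤ D) {n : ℕ} (hn : 0 < n) :
    ‖x n - y n‖ ≤ D / √(π * (κ * (1 - κ)) * n) := by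
  have hq : 0 < κ * (1 - κ) := mul_pos hκ.1 (sub_pos.2 hκ.2)
  have hq4 : 4 * (κ * (1 - κ)) ≤ 1 := by linarith [sq_nonneg (2 * κ - 1)]
  have hD0 : 0 ≤ D := (norm_nonneg _).trans (hD 0)
  calc ‖x n - y n‖ ≤ D * survival (κ * (1 - κ)) n 1 :=
        norm_sub_le_binomialMean_survival (Set.Ioo_subset_Icc_self hκ) hx hy hD n 0
    _ ≤ D * (1 / √(π * (κ * (1 - κ)) * n)) := by
        gcongr
        exact survival_one_le hq hq4 hn
    _ = D / √(π * (κ * (1 - κ)) * n) := mul_one_div _ _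

end AveragedSequence

section Update

section FMax

variable {ι : Type*} {s : Finset ι} {f g : ι → ℝ} {c : ℝ}

theorem fmax_nonneg (hf : ∀ k ∈ s, 0 ≤ f k) : 0 ≤ fmax s f :=
  Real.iSup_nonneg fun k => Real.iSup_nonneg (hf k)

theorem fmax_le (hc : 0 ≤ c) (hf : ∀ k ∈ s, f k ≤ c) : fmax s f ≤ c :=
  Real.iSup_le (fun k => Real.iSup_le (hf k) hc) hc

theorem le_fmax {k : ι} (hk : k ∈ s) : f k ≤ fmax s f := by
  have bdd : BddAbove (Set.range fun k => ⨆ _ : k ∈ s, f k) := by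
    refine ((s.finite_toSet.image f).insert 0).bddAbove.mono ?_
    rintro _ ⟨k, rfl⟩
    by_cases hk : k ∈ s
    · simpa [hk] using .inr ⟨k, hk, rfl⟩
    · simp [hk]
  simpa [fmax, hk] using le_ciSup bdd k

theorem fmax_le_fmax_add (hc : 0 ≤ c) (hg : ∀ k ∈ s, 0 ≤ g k) (h : ∀ k ∈ s, f k ≤ g k + c) :
    fmax s f ≤ fmax s g + c :=
  fmax_le (add_nonneg (fmax_nonneg hg) hc) fun k hk =>
    (h k hk).trans (by gcongr; exact le_fmax hk)

theorem abs_fmax_sub_fmax_le (hc : 0 ≤ c) (hf : ∀ k ∈ s, 0 ≤ f k) (hg : ∀ k ∈ s, 0 ≤ g k)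
    (h : ∀ k ∈ s, |f k - g k| ≤ c) : |fmax s f - fmax s g| ≤ c := by
  rw [abs_sub_le_iff, sub_le_iff_le_add', sub_le_iff_le_add']
  exact ⟨fmax_le_fmax_add hc hg fun k hk => sub_le_iff_le_add'.1 (abs_sub_le_iff.1 (h k hk)).1,
    fmax_le_fmax_add hc hf fun k hk => sub_le_iff_le_add'.1 (abs_sub_le_iff.1 (h k hk)).2⟩

end FMax

section Offer

variable {ι : Type*} {w α β : ι → ι → ℝ} {i j : ι} {c : ℝ}

theorem offer_eq_half_pos_add_min (h : 0 ≤ α j i) :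
    offer w α i j = 1 / 2 * (pos (w i j - α i j) + min (pos (w i j - α i j)) (α j i)) := by
  unfold offer pos
  grind

theorem offer_nonneg (h : 0 ≤ α j i) : 0 ≤ offer w α i j := by
  have hpos : 0 ≤ pos (w i j - α i j) := le_max_right _ _
  rw [offer_eq_half_pos_add_min h]
  positivity

theorem offer_le_pos : offer w α i j ≤ pos (w i j - α i j) :=
  sub_le_self _ (mul_nonneg one_half_pos.le (le_max_right _ _))

theorem abs_offer_sub_offer_le (hα : 0 ≤ α j i) (hβ : 0 ≤ β j i)
    (hij : |α i j - β i j| ≤ c) (hji : |α j i - β j i| ≤ c) :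
    |offer w α i j - offer w β i j| ≤ c := by
  have hpos : |pos (w i j - α i j) - pos (w i j - β i j)| ≤ c :=
    (abs_max_sub_max_le_abs _ _ _).trans (by rwa [sub_sub_sub_cancel_left, abs_sub_comm])
  have hmin : |min (pos (w i j - α i j)) (α j i) - min (pos (w i j - β i j)) (β j i)| ≤ c :=
    (abs_min_sub_min_le_max _ _ _ _).trans (max_le hpos hji)
  rw [offer_eq_half_pos_add_min hα, offer_eq_half_pos_add_min hβ, ← mul_sub, add_sub_add_comm,
    abs_mul, abs_of_pos one_half_pos]
  linarith [abs_add_le (pos (w i j - α i j) - pos (w i j - β i j))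
    (min (pos (w i j - α i j)) (α j i) - min (pos (w i j - β i j)) (β j i))]

end Offer

variable {G : SimpleGraph V} [DecidableRel G.Adj] {w α β : V → V → ℝ} {W c κ : ℝ}

theorem adj_of_mem_erase_neighborFinset {i j k : V} (hk : k ∈ (G.neighborFinset i).erase j) :
    G.Adj i k :=
  (G.mem_neighborFinset i k).1 (mem_of_mem_erase hk)

theorem upd_nonneg (hα : ValidMsg G α) (i j : V) : 0 ≤ upd G w α i j :=
  fmax_nonneg fun _ hk => offer_nonneg (hα _ _ (adj_of_mem_erase_neighborFinset hk))

theorem upd_le (hW : 0 ≤ W) (hw : ∀ i j, G.Adj i j → w i j ≤ W) (hα : ValidMsg G α) (i j : V) :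
    upd G w α i j ≤ W :=
  fmax_le hW fun k hk => by
    have hki := (adj_of_mem_erase_neighborFinset hk).symm
    exact offer_le_pos.trans (max_le (by linarith [hw k i hki, hα k i hki]) hW)

theorem abs_upd_sub_upd_le (hα : ValidMsg G α) (hβ : ValidMsg G β) (hc : 0 ≤ c)
    (h : ∀ i j, G.Adj i j → |α i j - β i j| ≤ c) (i j : V) :
    |upd G w α i j - upd G w β i j| ≤ c :=
  abs_fmax_sub_fmax_le hc
    (fun _ hk => offer_nonneg (hα _ _ (adj_of_mem_erase_neighborFinset hk)))
    (fun _ hk => offer_nonneg (hβ _ _ (adj_of_mem_erase_neighborFinset hk)))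
    fun k hk => by
      have hik := adj_of_mem_erase_neighborFinset hk
      exact abs_offer_sub_offer_le (hα i k hik) (hβ i k hik) (h k i hik.symm) (h i k hik)

theorem dyn_mem_Icc (hW : 0 ≤ W) (hw : ∀ i j, G.Adj i j → w i j ≤ W) (hκ : κ ∈ Set.Icc (0 : ℝ) 1)
    (hα : ∀ i j, G.Adj i j → α i j ∈ Set.Icc 0 W) (t : ℕ) :
    ∀ i j, G.Adj i j → dyn G w κ α t i j ∈ Set.Icc 0 W := by
  induction t with
  | zero => exact hα
  | succ t ih =>
    intro i j hij
    have valid : ValidMsg G (dyn G w κ α t) := fun i j hij => (ih i j hij).1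
    exact convex_Icc 0 W (ih i j hij) ⟨upd_nonneg valid i j, upd_le hW hw valid i j⟩
      (sub_nonneg.2 hκ.2) hκ.1 (sub_add_cancel 1 κ)

end Update

section EdgeVec

variable {V : Type*} [Fintype V] {G : SimpleGraph V} [DecidableRel G.Adj]

/-- A message vector as a point of `ℝ^{2|E|}`, where the norm is the largest absolute value over all
directed edges. Values off the edges are dropped. -/
def edgeVec (G : SimpleGraph V) (α : V → V → ℝ) : G.Dart → ℝ := fun d => α d.fst d.snd

theorem abs_sub_le_norm_edgeVec_sub (α β : V → V → ℝ) {i j : V} (hij : G.Adj i j) :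
    |α i j - β i j| ≤ ‖edgeVec G α - edgeVec G β‖ :=
  norm_le_pi_norm (edgeVec G α - edgeVec G β) ⟨(i, j), hij⟩

theorem norm_edgeVec_sub_le {α β : V → V → ℝ} {c : ℝ} (hc : 0 ≤ c)
    (h : ∀ i j, G.Adj i j → |α i j - β i j| ≤ c) : ‖edgeVec G α - edgeVec G β‖ ≤ c :=
  (pi_norm_le_iff_of_nonneg hc).2 fun d => h d.fst d.snd d.adj

end EdgeVec

section Rate

variable {G : SimpleGraph V} [DecidableRel G.Adj] {w α : V → V → ℝ} {W κ : ℝ}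

theorem norm_edgeVec_dyn_sub_upd_le (hW : 0 ≤ W) (hw : ∀ i j, G.Adj i j → w i j ≤ W)
    (hκ : κ ∈ Set.Ioo (0 : ℝ) 1) (hα : ∀ i j, G.Adj i j → α i j ∈ Set.Icc 0 W)
    {t : ℕ} (ht : 0 < t) :
    ‖edgeVec G (dyn G w κ α t) - edgeVec G (upd G w (dyn G w κ α t))‖ ≤
      W / √(Real.pi * (κ * (1 - κ)) * t) := by
  have mem := dyn_mem_Icc hW hw (Set.Ioo_subset_Icc_self hκ) hα
  have valid (n : ℕ) : ValidMsg G (dyn G w κ α n) := fun i j hij => (mem n i j hij).1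
  refine norm_sub_le_div_sqrt (x := fun n => edgeVec G (dyn G w κ α n))
    (y := fun n => edgeVec G (upd G w (dyn G w κ α n))) hκ (fun _ => rfl) ?_ ?_ ht
  · exact fun m n => norm_edgeVec_sub_le (norm_nonneg _) fun i j _ =>
      abs_upd_sub_upd_le (valid m) (valid n) (norm_nonneg _)
        (fun _ _ => abs_sub_le_norm_edgeVec_sub _ _) i j
  · exact fun n => norm_edgeVec_sub_le hW fun i j hij =>
      (abs_sub_le_of_nonneg_of_le (hα i j hij).1 (hα i j hij).2
        (upd_nonneg (valid n) i j) (upd_le hW hw (valid n) i j))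

theorem eps_fixedPt_after_Tstar_general
    (hW : 0 < W) (hw : ∀ i j, G.Adj i j → w i j ≤ W) (hκ : κ ∈ Set.Ioo (0 : ℝ) 1)
    (hα : ∀ i j, G.Adj i j → α i j ∈ Set.Icc 0 W) {ε : ℝ} (hε : 0 < ε) {t : ℕ}
    (ht : W ^ 2 / (Real.pi * κ * (1 - κ) * ε ^ 2) ≤ t) :
    IsEpsFixedPt G w (dyn G w κ α t) ε := by
  intro i j hij
  have hq : 0 < Real.pi * κ * (1 - κ) := mul_pos (mul_pos Real.pi_pos hκ.1) (sub_pos.2 hκ.2)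
  have ht0 : (0 : ℝ) < t := lt_of_lt_of_le (by positivity) ht
  have hsq : (W / ε) ^ 2 ≤ Real.pi * (κ * (1 - κ)) * t := by
    rw [div_le_iff₀ (by positivity)] at ht
    rw [div_pow, div_le_iff₀ (by positivity)]
    linarith
  calc |dyn G w κ α t i j - upd G w (dyn G w κ α t) i j|
      ≤ W / √(Real.pi * (κ * (1 - κ)) * t) :=
        (abs_sub_le_norm_edgeVec_sub _ _ hij).trans
          (norm_edgeVec_dyn_sub_upd_le hW.le hw hκ hα (by exact_mod_cast ht0))
    _ ≤ W / (W / ε) := by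
        gcongr
        exact Real.le_sqrt_of_sq_le hsq
    _ = ε := div_div_cancel₀ hW.ne'

end Rate

/-- For weights in `[0,1]`, any initial condition in `[0,1]^{2|E|}` and
any `ε > 0`, after `T*(ε) = 1/(π κ (1−κ) ε²)` steps every iterate of the natural
dynamics is an `ε`-fixed point. -/
theorem eps_fixedPt_after_Tstar
    {V : Type*} [Fintype V] [DecidableEq V] (G : SimpleGraph V) [DecidableRel G.Adj]
    (w : V → V → ℝ) (hw : GoodW G w) (hw1 : ∀ i j, G.Adj i j → w i j ≤ 1)
    (κ : ℝ) (hκ : κ ∈ Set.Ioo (0 : ℝ) 1)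
    (α0 : V → V → ℝ) (hα0 : ∀ i j, G.Adj i j → α0 i j ∈ Set.Icc (0 : ℝ) 1)
    (ε : ℝ) (hε : 0 < ε) :
    ∀ t : ℕ, 1 / (Real.pi * κ * (1 - κ) * ε ^ 2) ≤ t →
      IsEpsFixedPt G w (dyn G w κ α0 t) ε := by
  intro t ht
  exact eps_fixedPt_after_Tstar_general one_pos hw1 hκ hα0 hε (by rwa [one_pow])
end EN
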